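/- The real cube root of 2 does not belong to F_{√(1+x²)}; that is, there exists a subfield K of ℝ with √(1+x²) ∈ K for every x ∈ K such that 2^{1/3} ∉ K. (Hence duplication of the cube is impossible by origami.) -/

import Mathlib

/-!
The subfield `K` consists of the totally real numbers: the real algebraic numbers `a` all of whose
images under embeddings of the field of real algebraic numbers into `ℂ` are real. It is closed under
`x ↦ √(1+x²)`, because an embedding sends `√(1+x²)` to a square root of `1 + r²` with `r` real, and
this is a positive real number. It does not contain `2^{1/3}`: the polynomial `X³ - 2` is
irreducible over `ℚ`, so some embedding sends `2^{1/3}` to the nonreal root `2^{1/3} ω`, where `ω`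
is a primitive cube root of unity.
-/

open Polynomial

/-- A complex number is *totally real* if it is algebraic over ℚ and every complex
root of its minimal polynomial over ℚ is a real number. -/
def IsTotallyReal (α : ℂ) : Prop :=
  IsAlgebraic ℚ α ∧ ∀ z : ℂ, aeval z (minpoly ℚ α) = 0 → z.im = 0

/-- Membership in `F_{√(1+x²)}`, the smallest subfield of ℝ closed under
`x ↦ √(1+x²)`. -/
def MemFSqrtOneAddSq (α : ℝ) : Prop :=
  ∀ K : Subfield ℝ, (∀ x ∈ K, Real.sqrt (1 + x ^ 2) ∈ K) → α ∈ K

/-- Membership in `F_{√x}`, the smallest subfield of ℂ closed under taking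
square roots. -/
def MemFSqrt (α : ℂ) : Prop :=
  ∀ L : Subfield ℂ, (∀ z : ℂ, z ^ 2 ∈ L → z ∈ L) → α ∈ L

/-- The field of totally real numbers, as a subfield of `ℝ`: real algebraic numbers whose image
under every `ℚ`-embedding of the real algebraic numbers into `ℂ` is real. -/
noncomputable def totallyRealSubfield : Subfield ℝ :=
  (⨅ σ : algebraicClosure ℚ ℝ →ₐ[ℚ] ℂ,
    (Complex.ofRealHom.fieldRange).comap (σ : algebraicClosure ℚ ℝ →+* ℂ)).map
      (algebraMap (algebraicClosure ℚ ℝ) ℝ)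

theorem mem_totallyRealSubfield {x : ℝ} :
    x ∈ totallyRealSubfield ↔ ∃ a : algebraicClosure ℚ ℝ,
      (∀ σ : algebraicClosure ℚ ℝ →ₐ[ℚ] ℂ, ∃ r : ℝ, (r : ℂ) = σ a) ∧ (a : ℝ) = x := by
  simp only [totallyRealSubfield, Subfield.mem_map, Subfield.mem_iInf, Subfield.mem_comap,
    RingHom.mem_fieldRange]
  rfl

theorem sqrt_one_add_sq_mem_totallyRealSubfield {x : ℝ} (hx : x ∈ totallyRealSubfield) :
    Real.sqrt (1 + x ^ 2) ∈ totallyRealSubfield := by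
  rw [mem_totallyRealSubfield] at hx ⊢
  obtain ⟨a, ha, rfl⟩ := hx
  have hsq : Real.sqrt (1 + (a : ℝ) ^ 2) ^ 2 = 1 + (a : ℝ) ^ 2 := Real.sq_sqrt (by positivity)
  have hmem : Real.sqrt (1 + (a : ℝ) ^ 2) ∈ algebraicClosure ℚ ℝ := by
    rw [mem_algebraicClosure_iff]
    refine IsAlgebraic.of_pow two_pos ?_
    rw [hsq, ← mem_algebraicClosure_iff]
    exact (1 + a ^ 2).2
  refine ⟨⟨_, hmem⟩, fun σ => ?_, rfl⟩
  obtain ⟨r, hr⟩ := ha σ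
  have hb : (⟨_, hmem⟩ : algebraicClosure ℚ ℝ) ^ 2 = 1 + a ^ 2 := Subtype.ext hsq
  have hσ : σ ⟨_, hmem⟩ ^ 2 = ((Real.sqrt (1 + r ^ 2) : ℝ) : ℂ) ^ 2 := by
    rw [← map_pow, hb, ← Complex.ofReal_pow, Real.sq_sqrt (by positivity)]
    simp [hr]
  rcases sq_eq_sq_iff_eq_or_eq_neg.mp hσ with h | h
  · exact ⟨_, h.symm⟩
  · exact ⟨-Real.sqrt (1 + r ^ 2), by rw [h, Complex.ofReal_neg]⟩

theorem irreducible_X_pow_three_sub_two : Irreducible (X ^ 3 - C 2 : ℚ[X]) := by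
  refine X_pow_sub_C_irreducible_of_prime Nat.prime_three fun b hb => ?_
  -- A rational cube root of `2` would be integral over `ℤ`, hence an integer.
  have hint : IsIntegral ℤ b := by
    refine IsIntegral.of_pow three_pos ?_
    rw [hb]
    exact_mod_cast (isIntegral_algebraMap : IsIntegral ℤ (algebraMap ℤ ℚ 2))
  obtain ⟨n, rfl⟩ := IsIntegrallyClosed.isIntegral_iff.mp hint
  have hn : n ^ 3 = 2 := by
    have : (n : ℚ) ^ 3 = 2 := by simpa using hb
    exact_mod_cast this
  have h1 : 1 < n := by nlinarith [sq_nonneg n, sq_nonneg (n - 1), sq_nonneg (n + 1)]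
  nlinarith [sq_nonneg n, mul_self_nonneg (n - 2)]

/-- Some embedding of the real algebraic numbers into `ℂ` takes a cube root of `2` to a nonreal
number. -/
theorem not_mem_totallyRealSubfield_of_cube_eq_two {c : ℝ} (hc : c ^ 3 = 2) :
    c ∉ totallyRealSubfield := by
  rw [mem_totallyRealSubfield]
  rintro ⟨a, ha, rfl⟩
  have ha3 : a ^ 3 = 2 := Subtype.ext hc
  have hmin : minpoly ℚ a = X ^ 3 - C 2 := by
    symm
    refine minpoly.eq_of_irreducible_of_monic irreducible_X_pow_three_sub_two ?_
      (monic_X_pow_sub_C _ three_ne_zero)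
    simp [ha3]
  have hω := Complex.isPrimitiveRoot_exp 3 three_ne_zero
  generalize Complex.exp (2 * Real.pi * Complex.I / (3 : ℕ)) = ω at hω
  have hcC : ((a : ℝ) : ℂ) ^ 3 = 2 := by exact_mod_cast hc
  have hroot : ((a : ℝ) : ℂ) * ω ∈ (minpoly ℚ a).rootSet ℂ := by
    rw [hmin, mem_rootSet]
    refine ⟨(monic_X_pow_sub_C _ three_ne_zero).ne_zero, ?_⟩
    simp [mul_pow, hcC, hω.pow_eq_one]
  -- Two `ℚ`-algebra structures occur here, the canonical one of a field of characteristic zero and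
  -- the one of an intermediate field; they agree because such structures form a subsingleton.
  have halg : Algebra.IsAlgebraic ℚ (algebraicClosure ℚ ℝ) := by
    have h := algebraicClosure.isAlgebraic ℚ ℝ
    rwa [Subsingleton.elim (algebraicClosure ℚ ℝ).algebra' DivisionRing.toRatAlgebra] at h
  rw [← Algebra.IsAlgebraic.range_eval_eq_rootSet_minpoly ℂ a] at hroot
  obtain ⟨σ, hσ⟩ := hroot
  obtain ⟨r, hr⟩ := ha σ
  -- The image `r = a ω` is a real cube root of `2`, hence equal to `a`, which forces `ω = 1`.
  have hr3 : r ^ 3 = (a : ℝ) ^ 3 := by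
    have : (r : ℂ) ^ 3 = 2 := by
      rw [hr, ← map_pow, ha3, map_ofNat]
    rw [hc]
    exact_mod_cast this
  have hra : r = a := (Odd.strictMono_pow (by decide : Odd 3)).injective hr3
  have ha0 : ((a : ℝ) : ℂ) ≠ 0 := by
    intro h
    rw [h] at hcC
    norm_num at hcC
  refine hω.ne_one (by norm_num) (mul_left_cancel₀ ha0 ?_)
  rw [mul_one, ← hσ, ← hra]
  exact hr.symm

theorem cbrt_two_not_memFSqrtOneAddSq :
    ∃ K : Subfield ℝ, (∀ x ∈ K, Real.sqrt (1 + x ^ 2) ∈ K) ∧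
      ((2 : ℝ) ^ ((1 : ℝ) / 3) : ℝ) ∉ K := by
  refine ⟨totallyRealSubfield, fun x hx => sqrt_one_add_sq_mem_totallyRealSubfield hx,
    not_mem_totallyRealSubfield_of_cube_eq_two ?_⟩
  rw [← Real.rpow_natCast, ← Real.rpow_mul zero_le_two]
  norm_num
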